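/- arXiv:2506.09594 — 8 statements merged into one kernel-verified Lean document; each statement's English description precedes it below -/
import Mathlib

section
/- Let x and ξ be independent real-valued random variables on a probability space, and let 0 < β ≤ θ. Assume |x| ≤ β almost surely and that ξ is uniformly distributed on the interval [−θ, θ] (i.e. the law of ξ is (2θ)⁻¹ times Lebesgue measure restricted to [−θ, θ]). Then E[x] = E[θ · sign(x + ξ)]. -/
open MeasureTheory

theorem measurable_real_sign_aux : Measurable Real.sign := by
  unfold Real.sign
  refine Measurable.ite measurableSet_Iio measurable_const ?_
  exact Measurable.ite measurableSet_Ioi measurable_const measurable_const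

theorem abs_real_sign_le_aux (r : ℝ) : |Real.sign r| ≤ 1 := by
  rcases Real.sign_apply_eq r with h | h | h <;> rw [h] <;> norm_num

theorem integral_sign_aux (a θ : ℝ) (h : |a| ≤ θ) :
    ∫ t in Set.Icc (-θ) θ, Real.sign (a + t) = 2 * a := by
  obtain ⟨h1, h2⟩ := abs_le.mp h
  have hint : ∀ u v : ℝ, IntervalIntegrable (fun t => Real.sign (a + t)) volume u v := by
    intro u v
    refine (intervalIntegrable_const (c := (1 : ℝ))).mono_fun
      (measurable_real_sign_aux.comp (measurable_const.add measurable_id)).aestronglyMeasurable ?_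
    refine Filter.Eventually.of_forall fun t => ?_
    simpa using abs_real_sign_le_aux (a + t)
  rw [integral_Icc_eq_integral_Ioc, ← intervalIntegral.integral_of_le (by linarith),
    ← intervalIntegral.integral_add_adjacent_intervals (hint (-θ) (-a)) (hint (-a) θ)]
  have e1 : ∫ t in (-θ)..(-a), Real.sign (a + t) = ∫ t in (-θ)..(-a), (-1 : ℝ) := by
    rw [intervalIntegral.integral_of_le (by linarith), intervalIntegral.integral_of_le (by linarith),
      integral_Ioc_eq_integral_Ioo, integral_Ioc_eq_integral_Ioo]
    refine setIntegral_congr_fun measurableSet_Ioo fun t ht => ?_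
    exact Real.sign_of_neg (by linarith [ht.2])
  have e2 : ∫ t in (-a)..θ, Real.sign (a + t) = ∫ t in (-a)..θ, (1 : ℝ) := by
    rw [intervalIntegral.integral_of_le (by linarith), intervalIntegral.integral_of_le (by linarith)]
    refine setIntegral_congr_fun measurableSet_Ioc fun t ht => ?_
    exact Real.sign_of_pos (by linarith [ht.1])
  rw [e1, e2, intervalIntegral.integral_const, intervalIntegral.integral_const]
  simp only [smul_eq_mul]
  ring

/-- Proposition 1: for independent random variables `x` and `ξ` with `|x| ≤ β` almost surely
and `ξ` uniformly distributed on `[-θ, θ]` with `0 < β ≤ θ`, one has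
`E[x] = E[θ · sign(x + ξ)]`. -/
theorem dithered_one_bit_unbiased
    {Ω : Type*} [MeasureSpace Ω] [IsProbabilityMeasure (volume : Measure Ω)]
    (x ξ : Ω → ℝ) (hx : Measurable x) (hξ : Measurable ξ)
    (hindep : ProbabilityTheory.IndepFun x ξ (volume : Measure Ω))
    (β θ : ℝ) (hβ : 0 < β) (hβθ : β ≤ θ)
    (hbound : ∀ᵐ ω, |x ω| ≤ β)
    (hlaw : Measure.map ξ (volume : Measure Ω) =
      (ENNReal.ofReal (2 * θ))⁻¹ • (volume : Measure ℝ).restrict (Set.Icc (-θ) θ)) :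
    ∫ ω, x ω = ∫ ω, θ * Real.sign (x ω + ξ ω) := by
  have hθ : 0 < θ := lt_of_lt_of_le hβ hβθ
  have hm : Measurable fun p : ℝ × ℝ => θ * Real.sign (p.1 + p.2) :=
    (measurable_real_sign_aux.comp (measurable_fst.add measurable_snd)).const_mul θ
  have hprod := hindep.map_prod_eq_prod_map_map hx.aemeasurable hξ.aemeasurable
  haveI : IsProbabilityMeasure (Measure.map x (volume : Measure Ω)) :=
    Measure.isProbabilityMeasure_map hx.aemeasurable
  haveI : IsProbabilityMeasure (Measure.map ξ (volume : Measure Ω)) :=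
    Measure.isProbabilityMeasure_map hξ.aemeasurable
  have h1 : ∫ ω, θ * Real.sign (x ω + ξ ω) =
      ∫ p, θ * Real.sign (p.1 + p.2) ∂(Measure.map (fun ω => (x ω, ξ ω)) (volume : Measure Ω)) :=
    (integral_map (hx.prodMk hξ).aemeasurable hm.aestronglyMeasurable).symm
  have hi : Integrable (fun p : ℝ × ℝ => θ * Real.sign (p.1 + p.2))
      ((Measure.map x (volume : Measure Ω)).prod (Measure.map ξ (volume : Measure Ω))) := by
    refine Integrable.of_bound hm.aestronglyMeasurable θ (Filter.Eventually.of_forall fun p => ?_)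
    rw [Real.norm_eq_abs, abs_mul, abs_of_pos hθ]
    exact mul_le_of_le_one_right hθ.le (abs_real_sign_le_aux _)
  have h2 : ∫ ω, x ω = ∫ a, a ∂(Measure.map x (volume : Measure Ω)) :=
    (integral_map (f := fun a : ℝ => a) hx.aemeasurable
      measurable_id.aestronglyMeasurable).symm
  rw [h1, hprod, integral_prod _ hi, h2]
  have hb : ∀ᵐ a ∂(Measure.map x (volume : Measure Ω)), |a| ≤ β :=
    (ae_map_iff hx.aemeasurable (measurableSet_le measurable_id.abs measurable_const)).2 hbound
  refine integral_congr_ae ?_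
  filter_upwards [hb] with a ha
  rw [hlaw, integral_smul_measure, integral_const_mul, integral_sign_aux a θ (ha.trans hβθ),
    ENNReal.toReal_inv, ENNReal.toReal_ofReal (by positivity), smul_eq_mul]
  field_simp
end

section
/- Let E be a real inner product space, let a ∈ E with a ≠ 0, let λ > 0, and let ψ : ℝ → ℝ be nondecreasing on [0, ∞). Suppose t* ≥ 0 satisfies λψ(t*) + (1/2)(t* − ‖a‖)² ≤ λψ(t) + (1/2)(t − ‖a‖)² for all t ≥ 0. Then x* = (t*/‖a‖)·a is a global minimizer over E of f(x) = λψ(‖x‖) + (1/2)‖x − a‖², i.e. f(x*) ≤ f(x) for all x ∈ E. -/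
/-- Groupwise (tube-wise / slice-wise) generalized nonconvex thresholding: in a real
inner product space, if `t* ≥ 0` minimizes `t ↦ λψ(t) + (1/2)(t − ‖a‖)²` over `t ≥ 0`,
then `x* = (t*/‖a‖)·a` is a global minimizer of `x ↦ λψ(‖x‖) + (1/2)‖x − a‖²`. -/
theorem groupwise_prox_global_min
    {E : Type*} [NormedAddCommGroup E] [InnerProductSpace ℝ E]
    (a : E) (ha : a ≠ 0) (lam : ℝ) (hlam : 0 < lam)
    (ψ : ℝ → ℝ) (hψ : MonotoneOn ψ (Set.Ici 0))
    (tstar : ℝ) (ht0 : 0 ≤ tstar)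
    (hmin : ∀ t : ℝ, 0 ≤ t →
      lam * ψ tstar + (1 / 2) * (tstar - ‖a‖) ^ 2 ≤
        lam * ψ t + (1 / 2) * (t - ‖a‖) ^ 2) :
    ∀ x : E,
      lam * ψ ‖(tstar / ‖a‖) • a‖ + (1 / 2) * ‖(tstar / ‖a‖) • a - a‖ ^ 2 ≤
        lam * ψ ‖x‖ + (1 / 2) * ‖x - a‖ ^ 2 := by
  intro x
  have hpos : 0 < ‖a‖ := norm_pos_iff.mpr ha
  have h1 : ‖(tstar / ‖a‖) • a‖ = tstar := by
    rw [norm_smul, Real.norm_eq_abs, abs_of_nonneg (div_nonneg ht0 hpos.le)]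
    field_simp
  have h2 : ‖(tstar / ‖a‖) • a - a‖ ^ 2 = (tstar - ‖a‖) ^ 2 := by
    have h : (tstar / ‖a‖) • a - a = (tstar / ‖a‖ - 1) • a := by
      rw [sub_smul, one_smul]
    rw [h, norm_smul, mul_pow, Real.norm_eq_abs, sq_abs, ← mul_pow]
    congr 1
    field_simp
  have h3 : (‖x‖ - ‖a‖) ^ 2 ≤ ‖x - a‖ ^ 2 := by
    rw [← sq_abs (‖x‖ - ‖a‖)]
    exact pow_le_pow_left₀ (abs_nonneg _) (abs_norm_sub_norm_le x a) 2
  rw [h1, h2]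
  linarith [hmin ‖x‖ (norm_nonneg x)]
end

section
/- Let λ > 0 and γ > 1, and define the MCP penalty φ : ℝ → ℝ by φ(x) = λ|x| − x²/(2γ) for |x| ≤ γλ and φ(x) = γλ²/2 for |x| > γλ. For v ∈ ℝ define x* = 0 if |v| ≤ λ; x* = sign(v)·γ(|v| − λ)/(γ − 1) if λ < |v| ≤ γλ; and x* = v if |v| > γλ. Then x* is a global minimizer over ℝ of f(x) = φ(x) + (1/2)(x − v)². -/
/-- Reduced one-sided MCP inequality, with `c = 1/γ`, `K = γ * lam`. -/
theorem mcp_aux (c K w s t : ℝ) (hc0 : 0 < c) (hc1 : c < 1) (hK : 0 < K)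
    (ht : 0 ≤ t)
    (hs : (w ≤ c * K ∧ s = 0) ∨ (c * K < w ∧ w ≤ K ∧ (1 - c) * s = w - c * K) ∨
      (K < w ∧ s = w)) :
    (if s ≤ K then c * K * s - c * s ^ 2 / 2 else c * K ^ 2 / 2) + (1 / 2) * (s - w) ^ 2 ≤
    (if t ≤ K then c * K * t - c * t ^ 2 / 2 else c * K ^ 2 / 2) + (1 / 2) * (t - w) ^ 2 := by
  rcases hs with ⟨h1, rfl⟩ | ⟨h1, h2, h3⟩ | ⟨h1, rfl⟩
  · rw [if_pos hK.le]
    split_ifs with h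
    · nlinarith [mul_nonneg ht (sub_nonneg.2 h1), mul_nonneg (sub_pos.2 hc1).le (sq_nonneg t)]
    · nlinarith [mul_nonneg ht (sub_nonneg.2 h1), sq_nonneg (t - c * K),
        mul_pos (mul_pos hc0 (sub_pos.2 hc1)) (mul_pos hK hK)]
  · have hsK : s ≤ K := by
      by_contra hcon
      push Not at hcon
      nlinarith [mul_pos (sub_pos.2 hc1) (sub_pos.2 hcon)]
    have key : ∀ u : ℝ, c * K * s - c * s ^ 2 / 2 + (1 / 2) * (s - w) ^ 2 ≤
        c * K * u - c * u ^ 2 / 2 + (1 / 2) * (u - w) ^ 2 := by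
      intro u
      have hw : w = (1 - c) * s + c * K := by linarith
      subst hw
      nlinarith [mul_nonneg (sub_pos.2 hc1).le (sq_nonneg (u - s))]
    rw [if_pos hsK]
    split_ifs with h
    · exact key t
    · push Not at h
      nlinarith [key K, mul_nonneg (sub_pos.2 h).le (by linarith : 0 ≤ t + K - 2 * w)]
  · rw [if_neg (not_le.2 h1)]
    split_ifs with h
    · nlinarith [mul_nonneg (sub_pos.2 hc1).le (sq_nonneg (K - t)),
        mul_nonneg (sub_pos.2 h1).le (by linarith : 0 ≤ s + K - 2 * t)]
    · nlinarith [sq_nonneg (t - s)]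

/-- Closed-form proximity operator of the MCP (minimax concave penalty): the point
`x*` (zero, linearly rescaled, or identity, according to the magnitude of `v`) is a
global minimizer of `x ↦ φ(x) + (1/2)(x − v)²`. -/
theorem mcp_prox_global_min (lam γ : ℝ) (hlam : 0 < lam) (hγ : 1 < γ)
    (φ : ℝ → ℝ)
    (hφ : ∀ x : ℝ, φ x =
      if |x| ≤ γ * lam then lam * |x| - x ^ 2 / (2 * γ) else γ * lam ^ 2 / 2)
    (v : ℝ) (xstar : ℝ)
    (hx : xstar =
      if |v| ≤ lam then 0
      else if |v| ≤ γ * lam then Real.sign v * (γ * (|v| - lam) / (γ - 1))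
      else v) :
    ∀ x : ℝ, φ xstar + (1 / 2) * (xstar - v) ^ 2 ≤ φ x + (1 / 2) * (x - v) ^ 2 := by
  intro x
  have hγ0 : 0 < γ := by linarith
  have hγ1 : 0 < γ - 1 := by linarith
  have hc0 : 0 < 1 / γ := by positivity
  have hc1 : 1 / γ < 1 := by rw [div_lt_one hγ0]; exact hγ
  have hK : 0 < γ * lam := by positivity
  have hcK : 1 / γ * (γ * lam) = lam := by field_simp
  have hP : ∀ y : ℝ, φ y = if |y| ≤ γ * lam then
      1 / γ * (γ * lam) * |y| - 1 / γ * |y| ^ 2 / 2 else 1 / γ * (γ * lam) ^ 2 / 2 := by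
    intro y
    rw [hφ, hcK, sq_abs]
    congr 1 <;> field_simp
  have hsx : (xstar - v) ^ 2 = (|xstar| - |v|) ^ 2 ∧
      ((|v| ≤ 1 / γ * (γ * lam) ∧ |xstar| = 0) ∨
       (1 / γ * (γ * lam) < |v| ∧ |v| ≤ γ * lam ∧
        (1 - 1 / γ) * |xstar| = |v| - 1 / γ * (γ * lam)) ∨
      (γ * lam < |v| ∧ |xstar| = |v|)) := by
    rw [hcK]
    split_ifs at hx with h1 h2
    · subst hx
      exact ⟨by simp, Or.inl ⟨h1, by simp⟩⟩
    · push Not at h1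
      have hr : 0 < γ * (|v| - lam) / (γ - 1) :=
        div_pos (mul_pos hγ0 (by linarith)) hγ1
      have hr2 : (1 - 1 / γ) * (γ * (|v| - lam) / (γ - 1)) = |v| - lam := by
        field_simp
      have hv0 : v ≠ 0 := by
        rintro rfl
        simp at h1
        linarith
      generalize γ * (|v| - lam) / (γ - 1) = r at *
      rcases lt_or_gt_of_ne hv0 with hv | hv
      · rw [Real.sign_of_neg hv] at hx
        have hxa : |xstar| = r := by
          rw [hx, neg_one_mul, abs_neg, abs_of_pos hr]
        refine ⟨?_, Or.inr (Or.inl ⟨h1, h2, by rw [hxa, hr2]⟩)⟩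
        rw [hxa, hx, abs_of_neg hv]; ring
      · rw [Real.sign_of_pos hv] at hx
        have hxa : |xstar| = r := by
          rw [hx, one_mul, abs_of_pos hr]
        refine ⟨?_, Or.inr (Or.inl ⟨h1, h2, by rw [hxa, hr2]⟩)⟩
        rw [hxa, hx, abs_of_pos hv]; ring
    · subst hx
      exact ⟨by simp, Or.inr (Or.inr ⟨not_le.1 h2, rfl⟩)⟩
  have hxv : (|x| - |v|) ^ 2 ≤ (x - v) ^ 2 := by
    have h := le_abs_self (x * v)
    rw [abs_mul] at h
    nlinarith [sq_abs x, sq_abs v]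
  have main := mcp_aux (1 / γ) (γ * lam) |v| |xstar| |x| hc0 hc1 hK (abs_nonneg x) hsx.2
  rw [hP xstar, hP x, hsx.1]
  linarith
end

section
/- Let λ > 0 and a > 2, and define the SCAD penalty φ : ℝ → ℝ by φ(x) = λ|x| for |x| ≤ λ; φ(x) = (2aλ|x| − x² − λ²)/(2(a − 1)) for λ < |x| ≤ aλ; and φ(x) = (a + 1)λ²/2 for |x| > aλ. For v ∈ ℝ define x* = sign(v)·max(|v| − λ, 0) if |v| ≤ 2λ; x* = sign(v)·((a − 1)|v| − aλ)/(a − 2) if 2λ < |v| ≤ aλ; and x* = v if |v| > aλ. Then x* is a global minimizer over ℝ of f(x) = φ(x) + (1/2)(x − v)². -/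
/-- The SCAD penalty as a function of the magnitude. -/
noncomputable def scadG (lam a t : ℝ) : ℝ :=
  if t ≤ lam then lam * t
  else if t ≤ a * lam then (2 * a * lam * t - t ^ 2 - lam ^ 2) / (2 * (a - 1))
  else (a + 1) * lam ^ 2 / 2

lemma scad_mid (lam a t : ℝ) (ha : 2 < a) :
    (2 * a * lam * t - t ^ 2 - lam ^ 2) / (2 * (a - 1))
      = lam * t - (t - lam) ^ 2 / (2 * (a - 1)) := by
  have : a - 1 ≠ 0 := by linarith
  field_simp
  ring

lemma scad_const (lam a t : ℝ) (ha : 2 < a) :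
    (a + 1) * lam ^ 2 / 2
      = lam * t - (t - lam) ^ 2 / (2 * (a - 1)) + (t - a * lam) ^ 2 / (2 * (a - 1)) := by
  have : a - 1 ≠ 0 := by linarith
  field_simp
  ring

lemma scad_lower (lam a t : ℝ) (ha : 2 < a) :
    lam * t - (t - lam) ^ 2 / (2 * (a - 1)) ≤ scadG lam a t := by
  have hb : 0 < a - 1 := by linarith
  have h1 : 0 ≤ (t - lam) ^ 2 / (2 * (a - 1)) := by positivity
  have h2 : 0 ≤ (t - a * lam) ^ 2 / (2 * (a - 1)) := by positivity
  unfold scadG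
  split_ifs
  · linarith
  · rw [scad_mid lam a t ha]
  · rw [scad_const lam a t ha]; linarith

lemma sq_div_le (a x : ℝ) (ha : 2 < a) : x ^ 2 / (2 * (a - 1)) ≤ x ^ 2 / 2 := by
  apply div_le_div_of_nonneg_left (sq_nonneg x) (by norm_num) (by linarith)

lemma scad_core (lam a w s t : ℝ) (hlam : 0 < lam) (ha : 2 < a) (ht : 0 ≤ t)
    (hs : s = if w ≤ 2 * lam then max (w - lam) 0
      else if w ≤ a * lam then ((a - 1) * w - a * lam) / (a - 2) else w) :
    scadG lam a s + (1 / 2) * (s - w) ^ 2 ≤ scadG lam a t + (1 / 2) * (t - w) ^ 2 := by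
  have hl := scad_lower lam a t ha
  have hb : 0 < a - 1 := by linarith
  have hb2 : 0 < a - 2 := by linarith
  split_ifs at hs with h1 h2
  · have hsl : s ≤ lam := by rw [hs]; exact max_le (by linarith) hlam.le
    have hs0 : 0 ≤ s := by rw [hs]; exact le_max_right _ _
    have hsG : scadG lam a s = lam * s := by simp [scadG, hsl]
    have key : ∀ r, 0 ≤ r → lam * s + (1 / 2) * (s - w) ^ 2 ≤ lam * r + (1 / 2) * (r - w) ^ 2 := by
      intro r hr
      rcases le_total (w - lam) 0 with h | h
      · rw [max_eq_right h] at hs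
        subst hs
        nlinarith [mul_nonneg hr (sub_nonneg.2 h)]
      · rw [max_eq_left h] at hs
        subst hs
        nlinarith [sq_nonneg (r - (w - lam))]
    rw [hsG]
    by_cases htl : t ≤ lam
    · have : scadG lam a t = lam * t := by simp [scadG, htl]
      rw [this]; exact key t ht
    · push Not at htl
      have h3 := key lam hlam.le
      have h4 := sq_div_le a (t - lam) ha
      nlinarith [mul_nonneg (sub_nonneg.2 htl.le) (sub_nonneg.2 h1)]
  · push Not at h1
    have e : (a - 2) * s = (a - 1) * w - a * lam := by rw [hs]; field_simp
    have hsl : lam < s := by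
      rw [hs, lt_div_iff₀ hb2]; nlinarith
    have hsa : s ≤ a * lam := by
      rw [hs, div_le_iff₀ hb2]; nlinarith
    have hsG : scadG lam a s = lam * s - (s - lam) ^ 2 / (2 * (a - 1)) := by
      rw [← scad_mid lam a s ha]; simp [scadG, not_le.2 hsl, hsa]
    rw [hsG]
    have hw : w = ((a - 2) * s + a * lam) / (a - 1) := by
      field_simp; linarith
    have id : lam * t - (t - lam) ^ 2 / (2 * (a - 1)) + (1 / 2) * (t - w) ^ 2
        - (lam * s - (s - lam) ^ 2 / (2 * (a - 1)) + (1 / 2) * (s - w) ^ 2)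
        = (t - s) ^ 2 / 2 - (t - s) ^ 2 / (2 * (a - 1)) := by
      rw [hw]; field_simp; ring
    have := sq_div_le a (t - s) ha
    linarith
  · push Not at h1 h2
    subst hs
    have hsG : scadG lam a s = (a + 1) * lam ^ 2 / 2 := by
      have : lam < s := by linarith
      simp [scadG, not_le.2 this, not_le.2 h2]
    rw [hsG]
    by_cases hta : t ≤ a * lam
    · have h3 := scad_const lam a t ha
      have h4 := sq_div_le a (t - a * lam) ha
      nlinarith [mul_nonneg (sub_nonneg.2 hta) (sub_nonneg.2 h2.le), sq_nonneg (s - a * lam)]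
    · have : ¬ t ≤ lam := by
        push Not at hta ⊢; nlinarith
      have : scadG lam a t = (a + 1) * lam ^ 2 / 2 := by simp [scadG, this, hta]
      rw [this]; nlinarith [sq_nonneg (t - s)]

/-- Closed-form proximity operator of the SCAD (smoothly clipped absolute deviation)
penalty: the point `x*` (soft-thresholded, linearly rescaled, or identity, according to
the magnitude of `v`) is a global minimizer of `x ↦ φ(x) + (1/2)(x − v)²`. -/
theorem scad_prox_global_min (lam a : ℝ) (hlam : 0 < lam) (ha : 2 < a)
    (φ : ℝ → ℝ)
    (hφ : ∀ x : ℝ, φ x =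
      if |x| ≤ lam then lam * |x|
      else if |x| ≤ a * lam then (2 * a * lam * |x| - x ^ 2 - lam ^ 2) / (2 * (a - 1))
      else (a + 1) * lam ^ 2 / 2)
    (v : ℝ) (xstar : ℝ)
    (hx : xstar =
      if |v| ≤ 2 * lam then Real.sign v * max (|v| - lam) 0
      else if |v| ≤ a * lam then Real.sign v * (((a - 1) * |v| - a * lam) / (a - 2))
      else v) :
    ∀ x : ℝ, φ xstar + (1 / 2) * (xstar - v) ^ 2 ≤ φ x + (1 / 2) * (x - v) ^ 2 := by
  intro x
  have hG : ∀ y, φ y = scadG lam a |y| := by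
    intro y; rw [hφ y]; simp only [scadG, sq_abs]
  obtain ⟨s, hs⟩ : ∃ s, s = if |v| ≤ 2 * lam then max (|v| - lam) 0
      else if |v| ≤ a * lam then ((a - 1) * |v| - a * lam) / (a - 2) else |v| := ⟨_, rfl⟩
  have hs0 : 0 ≤ s := by
    rw [hs]
    split_ifs with h1 h2
    · exact le_max_right _ _
    · push Not at h1
      apply div_nonneg <;> nlinarith
    · exact abs_nonneg v
  have hxs : xstar = Real.sign v * s := by
    rw [hx, hs]
    split_ifs
    · rfl
    · rfl
    · rcases lt_trichotomy v 0 with h | h | h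
      · rw [Real.sign_of_neg h, abs_of_neg h]; ring
      · simp [h]
      · rw [Real.sign_of_pos h, abs_of_pos h]; ring
  have core := scad_core lam a |v| s |x| hlam ha (abs_nonneg x) hs
  have hsq : (|x| - |v|) ^ 2 ≤ (x - v) ^ 2 := sq_le_sq.2 (abs_abs_sub_abs_le x v)
  have hstar : |xstar| = s ∧ (xstar - v) ^ 2 = (s - |v|) ^ 2 := by
    rcases lt_trichotomy v 0 with h | h | h
    · rw [hxs, Real.sign_of_neg h, abs_of_neg h]
      refine ⟨?_, by ring⟩
      rw [neg_one_mul, abs_neg, abs_of_nonneg hs0]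
    · have : s = 0 := by
        rw [hs, h, abs_zero, if_pos (by linarith), max_eq_right (by linarith)]
      rw [hxs, this, h]; simp
    · rw [hxs, Real.sign_of_pos h, abs_of_pos h]
      refine ⟨?_, by ring⟩
      rw [one_mul, abs_of_nonneg hs0]
  rw [hG xstar, hG x, hstar.1, hstar.2]
  linarith
end

section
/- Let λ > 0, θ > 0 and v ∈ ℝ, and define the capped-ℓ₁ penalty φ(x) = λ·min(|x|, θ). Set x₁ = sign(v)·min(max(|v| − λ, 0), θ) and x₂ = sign(v)·max(|v|, θ), and let f(x) = φ(x) + (1/2)(x − v)². Then min(f(x₁), f(x₂)) ≤ f(x) for all x ∈ ℝ; in particular, whichever of x₁, x₂ attains the smaller objective value is a global minimizer of f. -/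
/-- The case of nonnegative `v`. -/
lemma capped_core (l θ v x : ℝ) (hl : 0 < l) (hθ : 0 < θ) (hv : 0 ≤ v) :
    l * min |min (max (v - l) 0) θ| θ + (1 / 2) * (min (max (v - l) 0) θ - v) ^ 2
        ≤ l * min |x| θ + (1 / 2) * (x - v) ^ 2 ∨
      l * min |max v θ| θ + (1 / 2) * (max v θ - v) ^ 2
        ≤ l * min |x| θ + (1 / 2) * (x - v) ^ 2 := by
  have hx0 := abs_nonneg x
  have hsq : (|x| - v) ^ 2 ≤ (x - v) ^ 2 := by
    nlinarith [sq_abs x, mul_le_mul_of_nonneg_left (le_abs_self x) hv]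
  generalize |x| = t at *
  rcases le_total t θ with h | h
  · left
    rw [min_eq_left h, abs_of_nonneg (le_min (le_max_right _ _) hθ.le),
      min_eq_left (min_le_right _ _)]
    rcases le_total (v - l) 0 with h1 | h1
    · rw [max_eq_right h1, min_eq_left hθ.le]
      nlinarith [sq_nonneg t, mul_nonneg hx0 (sub_nonneg.2 h1)]
    · rw [max_eq_left h1]
      rcases le_total (v - l) θ with h2 | h2
      · rw [min_eq_left h2]
        nlinarith [sq_nonneg (t - (v - l))]
      · rw [min_eq_right h2]
        nlinarith [sq_nonneg (t - θ), mul_nonneg (sub_nonneg.2 h) (sub_nonneg.2 h2)]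
  · right
    rw [min_eq_right h, abs_of_nonneg (hv.trans (le_max_left _ _)),
      min_eq_right (le_max_right _ _)]
    rcases le_total v θ with h1 | h1
    · rw [max_eq_right h1]
      nlinarith [mul_nonneg (sub_nonneg.2 h) (sub_nonneg.2 h1), sq_nonneg (t - θ)]
    · rw [max_eq_left h1]
      nlinarith [sq_nonneg (x - v)]

/-- Proximity operator of the capped-ℓ₁ penalty `φ(x) = λ·min(|x|, θ)`: with
`x₁ = sign(v)·min(max(|v| − λ, 0), θ)` and `x₂ = sign(v)·max(|v|, θ)`, one has
`min(f(x₁), f(x₂)) ≤ f(x)` for all `x`, where `f(x) = φ(x) + (1/2)(x − v)²`. -/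
theorem capped_l1_prox_global_min (lam θ v : ℝ) (hlam : 0 < lam) (hθ : 0 < θ)
    (φ : ℝ → ℝ) (hφ : ∀ x : ℝ, φ x = lam * min |x| θ)
    (x₁ x₂ : ℝ)
    (h₁ : x₁ = Real.sign v * min (max (|v| - lam) 0) θ)
    (h₂ : x₂ = Real.sign v * max |v| θ)
    (f : ℝ → ℝ) (hf : ∀ x : ℝ, f x = φ x + (1 / 2) * (x - v) ^ 2) :
    ∀ x : ℝ, min (f x₁) (f x₂) ≤ f x := by
  intro x
  rw [min_le_iff]
  simp only [hf, hφ]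
  rcases lt_trichotomy v 0 with hv | hv | hv
  · have := capped_core lam θ (-v) (-x) hlam hθ (by linarith)
    rw [Real.sign_of_neg hv, abs_of_neg hv] at h₁ h₂
    have e : ∀ a : ℝ, (-1 * a - v) ^ 2 = (a - -v) ^ 2 := fun a => by ring
    have e' : (-x - -v) ^ 2 = (x - v) ^ 2 := by ring
    have e2 : ∀ a : ℝ, |-1 * a| = |a| := fun a => by rw [neg_one_mul, abs_neg]
    rw [abs_neg x, e'] at this
    rw [h₁, h₂, e, e, e2, e2]
    exact this
  · left
    have h0 : x₁ = 0 := by rw [h₁, hv]; simp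
    rw [h0, hv, abs_zero, min_eq_left hθ.le]
    have : 0 ≤ lam * min |x| θ := mul_nonneg hlam.le (le_min (abs_nonneg x) hθ.le)
    nlinarith [sq_nonneg x]
  · rw [Real.sign_of_pos hv, abs_of_pos hv, one_mul] at h₁ h₂
    rw [h₁, h₂]
    exact capped_core lam θ v x hlam hθ hv.le
end

section
/- Let 0 < q < 1 and λ > 0, and set β = (2λ(1 − q))^{1/(2−q)} and τ_q = β + λqβ^{q−1}. For v ≥ 0 let f(x) = λ|x|^q + (1/2)(x − v)². Then: (i) if 0 ≤ v < τ_q, the set of global minimizers of f over ℝ is {0}; (ii) if v = τ_q, the set of global minimizers of f is {0, β}; (iii) if v > τ_q, there is a unique real number b with b ≥ β and b + λq·b^{q−1} = v, one has β < b < v, and the set of global minimizers of f is {b}. -/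
theorem aux_tangent (q b x : ℝ) (hq1 : q < 1) (hb : 0 < b) (hx : 0 < x) (hne : x ≠ b) :
    b ^ (q - 1) * (b - (1 - q) * (x - b)) < b * x ^ (q - 1) := by
  have ht : 0 < x / b := div_pos hx hb
  have hne' : x / b ≠ 1 := by
    intro h
    exact hne ((div_eq_one_iff_eq hb.ne').1 h)
  have h1 := Real.log_lt_sub_one_of_pos ht hne'
  have h2 := Real.add_one_le_exp (Real.log (x / b) * (q - 1))
  rw [← Real.rpow_def_of_pos ht] at h2
  have h3 : 1 - (1 - q) * (x / b - 1) < (x / b) ^ (q - 1) := by nlinarith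
  have hx' : x ^ (q - 1) = b ^ (q - 1) * (x / b) ^ (q - 1) := by
    rw [← Real.mul_rpow hb.le ht.le]
    congr 1
    field_simp
  have hB : 0 < b ^ (q - 1) := Real.rpow_pos_of_pos hb _
  have h4 : b - (1 - q) * (x - b) = b * (1 - (1 - q) * (x / b - 1)) := by
    field_simp
  rw [hx', h4]
  have := mul_lt_mul_of_pos_left h3 (mul_pos hb hB)
  nlinarith


/-- Characterization of the proximity operator of the ℓ_q penalty (`0 < q < 1`):
with `β = (2λ(1−q))^{1/(2−q)}` and `τ_q = β + λqβ^{q−1}`, for `v ≥ 0` and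
`f(x) = λ|x|^q + (1/2)(x − v)²`, the set of global minimizers of `f` is `{0}` when
`v < τ_q`, `{0, β}` when `v = τ_q`, and `{b}` when `v > τ_q`, where `b` is the unique
real with `b ≥ β` and `b + λq·b^{q−1} = v`, satisfying `β < b < v`. -/
theorem lq_prox_characterization (q lam : ℝ) (hq0 : 0 < q) (hq1 : q < 1) (hlam : 0 < lam)
    (β τq : ℝ)
    (hβ : β = (2 * lam * (1 - q)) ^ ((1 : ℝ) / (2 - q)))
    (hτ : τq = β + lam * q * β ^ (q - 1))
    (v : ℝ) (hv : 0 ≤ v)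
    (f : ℝ → ℝ) (hf : ∀ x : ℝ, f x = lam * |x| ^ q + (1 / 2) * (x - v) ^ 2) :
    (v < τq → {x : ℝ | ∀ y : ℝ, f x ≤ f y} = {0}) ∧
    (v = τq → {x : ℝ | ∀ y : ℝ, f x ≤ f y} = {0, β}) ∧
    (τq < v → ∃ b : ℝ,
      (β ≤ b ∧ b + lam * q * b ^ (q - 1) = v) ∧
      (∀ b' : ℝ, β ≤ b' → b' + lam * q * b' ^ (q - 1) = v → b' = b) ∧
      β < b ∧ b < v ∧ {x : ℝ | ∀ y : ℝ, f x ≤ f y} = {b}) := by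

  have hpow : ∀ x : ℝ, 0 < x → x ^ q = x * x ^ (q - 1) := by
    intro x hx
    rw [Real.rpow_sub_one hx.ne']
    field_simp
  have hβ0 : 0 < β := by
    rw [hβ]
    exact Real.rpow_pos_of_pos (by have := sub_pos.2 hq1; positivity) _
  have hB0 : 0 < β ^ (q - 1) := Real.rpow_pos_of_pos hβ0 _
  have hβ2 : β ^ (2 - q) = 2 * lam * (1 - q) := by
    rw [hβ, ← Real.rpow_mul (by have := sub_pos.2 hq1; positivity),
      one_div_mul_cancel (by linarith), Real.rpow_one]
  have hβB : β = 2 * lam * (1 - q) * β ^ (q - 1) := by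
    rw [← hβ2, ← Real.rpow_add hβ0]
    ring_nf
    rw [Real.rpow_one]
  have hf0 : f 0 = 1 / 2 * v ^ 2 := by
    rw [hf, abs_zero, Real.zero_rpow hq0.ne']
    ring
  have hfpos : ∀ x : ℝ, 0 < x → f x = lam * (x * x ^ (q - 1)) + 1 / 2 * (x - v) ^ 2 := by
    intro x hx
    rw [hf, abs_of_pos hx, hpow x hx]
  have hneg : ∀ x : ℝ, x < 0 → f 0 < f x := by
    intro x hx
    rw [hf0, hf]
    have : 0 < lam * |x| ^ q := mul_pos hlam (Real.rpow_pos_of_pos (abs_pos.2 hx.ne) _)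
    nlinarith [mul_nonneg hv (neg_nonneg.2 hx.le), sq_nonneg x]
  have hβeq : lam * β ^ (q - 1) + β / 2 = τq := by
    rw [hτ]
    linarith
  have hh : ∀ x : ℝ, 0 < x → x ≠ β → τq < lam * x ^ (q - 1) + x / 2 := by
    intro x hx hne
    have h := mul_lt_mul_of_pos_left (aux_tangent q β x hq1 hβ0 hx hne) hlam
    have h2 : β * τq < β * (lam * x ^ (q - 1) + x / 2) := by
      rw [← hβeq]
      have h3 : lam * (β ^ (q - 1) * (β - (1 - q) * (x - β)))
          = lam * β ^ (q - 1) * β - (2 * lam * (1 - q) * β ^ (q - 1)) * (x - β) / 2 := by ring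
      rw [h3, ← hβB] at h
      nlinarith
    exact lt_of_mul_lt_mul_left h2 hβ0.le
  have hdiff : ∀ x : ℝ, 0 < x → f x - f 0 = x * (lam * x ^ (q - 1) + x / 2 - v) := by
    intro x hx
    rw [hfpos x hx, hf0]
    ring
  refine ⟨?_, ?_, ?_⟩
  · intro hlt
    have key : ∀ x : ℝ, x ≠ 0 → f 0 < f x := by
      intro x hx
      rcases lt_or_gt_of_ne hx with h | h
      · exact hneg x h
      · have h1 : τq ≤ lam * x ^ (q - 1) + x / 2 := by
          by_cases hxb : x = β
          · rw [hxb, hβeq]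
          · exact (hh x h hxb).le
        have := mul_pos h (show 0 < lam * x ^ (q - 1) + x / 2 - v by linarith)
        linarith [hdiff x h]
    ext x
    simp only [Set.mem_setOf_eq, Set.mem_singleton_iff]
    constructor
    · intro h
      by_contra hx
      exact absurd (h 0) (not_le.2 (key x hx))
    · rintro rfl y
      by_cases hy : y = 0
      · rw [hy]
      · exact (key y hy).le
  · intro heq
    have hfb : f β = f 0 := by
      have := hdiff β hβ0
      rw [hβeq, heq] at this
      linarith
    have key : ∀ x : ℝ, x ≠ 0 → x ≠ β → f 0 < f x := by
      intro x hx hxb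
      rcases lt_or_gt_of_ne hx with h | h
      · exact hneg x h
      · have := mul_pos h (show 0 < lam * x ^ (q - 1) + x / 2 - v by linarith [hh x h hxb])
        linarith [hdiff x h]
    have key2 : ∀ y : ℝ, f 0 ≤ f y := by
      intro y
      by_cases hy : y = 0
      · rw [hy]
      by_cases hy2 : y = β
      · rw [hy2, hfb]
      exact (key y hy hy2).le
    ext x
    simp only [Set.mem_setOf_eq, Set.mem_singleton_iff, Set.mem_insert_iff]
    constructor
    · intro h
      by_contra hx
      push Not at hx
      exact absurd (h 0) (not_le.2 (key x hx.1 hx.2))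
    · rintro (rfl | rfl) y
      · exact key2 y
      · rw [hfb]
        exact key2 y
  · intro hlt
    have hc0 : 0 < lam * q := mul_pos hlam hq0
    have hβv : β < v := by
      have := mul_pos hc0 hB0
      linarith
    have hv0 : 0 < v := hβ0.trans hβv
    have hA : ∀ b : ℝ, β ≤ b → 2 * lam * (1 - q) * b ^ (q - 1) ≤ β := by
      intro b hb
      have h1 : b ^ (q - 1) ≤ β ^ (q - 1) :=
        Real.rpow_le_rpow_of_nonpos hβ0 hb (by linarith)
      have h2 : 0 ≤ 2 * lam * (1 - q) := by
        have := sub_pos.2 hq1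
        positivity
      calc _ ≤ 2 * lam * (1 - q) * β ^ (q - 1) := mul_le_mul_of_nonneg_left h1 h2
        _ = β := hβB.symm
    have hmono : ∀ b c : ℝ, β ≤ b → b < c →
        b + lam * q * b ^ (q - 1) < c + lam * q * c ^ (q - 1) := by
      intro b c hb hbc
      have hb0 : 0 < b := hβ0.trans_le hb
      have h := mul_lt_mul_of_pos_left
        (aux_tangent q b c hq1 hb0 (hb0.trans hbc) hbc.ne') hc0
      have h1 := hA b hb
      have h2 : b * (b + lam * q * b ^ (q - 1)) < b * (c + lam * q * c ^ (q - 1)) := by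
        have h3 : lam * q * (b ^ (q - 1) * (b - (1 - q) * (c - b)))
          = lam * q * b ^ (q - 1) * b
            - q / 2 * ((2 * lam * (1 - q) * b ^ (q - 1)) * (c - b)) := by ring
        rw [h3] at h
        have h4 : (2 * lam * (1 - q) * b ^ (q - 1)) * (c - b) ≤ b * (c - b) :=
          mul_le_mul_of_nonneg_right (h1.trans hb) (by linarith)
        have h5 : 0 < b * (c - b) := mul_pos hb0 (by linarith)
        have h6 := mul_le_mul_of_nonneg_left h4 (show 0 ≤ q / 2 by linarith)
        nlinarith
      exact lt_of_mul_lt_mul_left h2 hb0.le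
    have hcont : ContinuousOn (fun b : ℝ => b + lam * q * b ^ (q - 1)) (Set.Icc β v) := by
      apply continuousOn_id.add
      apply continuousOn_const.mul
      apply continuousOn_id.rpow_const
      intro x hx
      left
      exact (hβ0.trans_le hx.1).ne'
    have hivt := intermediate_value_Icc hβv.le hcont
    have hmem : v ∈ Set.Icc (β + lam * q * β ^ (q - 1)) (v + lam * q * v ^ (q - 1)) := by
      constructor
      · linarith
      · have := mul_pos hc0 (Real.rpow_pos_of_pos hv0 (q - 1))
        linarith
    obtain ⟨b, ⟨hb1, hb2⟩, hbv⟩ := hivt hmem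
    simp only at hbv
    have hb0 : 0 < b := hβ0.trans_le hb1
    have hA0 : 0 < b ^ (q - 1) := Real.rpow_pos_of_pos hb0 _
    have hβb : β < b := by
      rcases hb1.lt_or_eq with h | h
      · exact h
      · rw [← h] at hbv
        linarith
    have hd : 2 * lam * (1 - q) * b ^ (q - 1) < b := (hA b hb1).trans_lt hβb
    have hstrict0 : f b < f 0 := by
      have h1 := hdiff b hb0
      have h2 : lam * b ^ (q - 1) + b / 2 - v < 0 := by
        rw [← hbv]
        linarith
      have := mul_neg_of_pos_of_neg hb0 h2
      linarith
    have key : ∀ x : ℝ, x ≠ b → f b < f x := by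
      intro x hne
      rcases lt_trichotomy x 0 with h | h | h
      · exact hstrict0.trans (hneg x h)
      · rw [h]
        exact hstrict0
      · have ht := mul_lt_mul_of_pos_left (aux_tangent q b x hq1 hb0 h hne) (mul_pos hlam h)
        rw [hfpos x h, hfpos b hb0]
        generalize x ^ (q - 1) = X at *
        generalize b ^ (q - 1) = A at *
        have h1 : 0 ≤ (b - 2 * lam * (1 - q) * A) * (x - b) ^ 2 :=
          mul_nonneg (by linarith) (sq_nonneg _)
        have h2 : 0 < b * (lam * (x * X) + 1 / 2 * (x - v) ^ 2
            - (lam * (b * A) + 1 / 2 * (b - v) ^ 2)) := by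
          rw [← hbv]
          nlinarith
        have := (mul_pos_iff_of_pos_left hb0).1 h2
        linarith
    refine ⟨b, ⟨hb1, hbv⟩, ?_, hβb, ?_, ?_⟩
    · intro c hc hcv
      rcases lt_trichotomy c b with h | h | h
      · have := hmono c b hc h
        linarith
      · exact h
      · have := hmono b c hb1 h
        linarith
    · have := mul_pos hc0 hA0
      linarith
    · ext x
      simp only [Set.mem_setOf_eq, Set.mem_singleton_iff]
      constructor
      · intro h
        by_contra hx
        exact absurd (h b) (not_le.2 (key x hx))
      · rintro rfl y
        by_cases hy : y = x
        · rw [hy]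
        · exact (key y hy).le
end

section
/- Let λ > 0 and θ > 0, define the logarithmic penalty φ(x) = λ·log(1 + |x|/θ), let v ≥ 0 and f(x) = φ(x) + (1/2)(x − v)². If (v + θ)² < 4λ, then 0 is a global minimizer of f over ℝ. If (v + θ)² ≥ 4λ, set x₁ = max(0, ((v − θ) + √((v + θ)² − 4λ))/2); then min(f(0), f(x₁)) ≤ f(x) for all x ∈ ℝ, so whichever of 0, x₁ attains the smaller objective value is a global minimizer of f. -/
lemma logprox_g_deriv (lam θ v x : ℝ) (hθ : 0 < θ) (hx : 0 ≤ x) :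
    HasDerivAt (fun y : ℝ => lam * Real.log (1 + y / θ) + (1 / 2) * (y - v) ^ 2)
      (((x - v) * (x + θ) + lam) / (x + θ)) x := by
  have hne : 1 + x / θ ≠ 0 := by positivity
  have hne2 : x + θ ≠ 0 := by positivity
  have hne3 : θ + x ≠ 0 := by positivity
  have h1 : HasDerivAt (fun y : ℝ => 1 + y / θ) (1 / θ) x :=
    ((hasDerivAt_id x).div_const θ).const_add 1
  have h2 := (h1.log hne).const_mul lam
  have h3 := ((((hasDerivAt_id x).sub_const v).pow 2).const_mul (1 / 2 : ℝ))
  have h4 := h2.add h3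
  refine h4.congr_deriv ?_
  simp only [id]
  field_simp
  ring

lemma logprox_g_mono (lam θ v a b : ℝ) (hθ : 0 < θ) (ha : 0 ≤ a) (hab : a ≤ b)
    (hq : ∀ x, a ≤ x → x ≤ b → 0 ≤ (x - v) * (x + θ) + lam) :
    lam * Real.log (1 + a / θ) + (1 / 2) * (a - v) ^ 2
      ≤ lam * Real.log (1 + b / θ) + (1 / 2) * (b - v) ^ 2 := by
  have hm : MonotoneOn (fun y : ℝ => lam * Real.log (1 + y / θ) + (1 / 2) * (y - v) ^ 2)
      (Set.Icc a b) := by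
    apply monotoneOn_of_deriv_nonneg (convex_Icc a b)
    · intro x hx
      exact (logprox_g_deriv lam θ v x hθ (ha.trans hx.1)).continuousAt.continuousWithinAt
    · intro x hx
      have hx := interior_subset hx
      exact (logprox_g_deriv lam θ v x hθ (ha.trans hx.1)).differentiableAt.differentiableWithinAt
    · intro x hx
      have hx := interior_subset hx
      rw [(logprox_g_deriv lam θ v x hθ (ha.trans hx.1)).deriv]
      exact div_nonneg (hq x hx.1 hx.2) (by linarith [hx.1])
  exact hm (Set.left_mem_Icc.2 hab) (Set.right_mem_Icc.2 hab) hab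

lemma logprox_g_anti (lam θ v a b : ℝ) (hθ : 0 < θ) (ha : 0 ≤ a) (hab : a ≤ b)
    (hq : ∀ x, a ≤ x → x ≤ b → (x - v) * (x + θ) + lam ≤ 0) :
    lam * Real.log (1 + b / θ) + (1 / 2) * (b - v) ^ 2
      ≤ lam * Real.log (1 + a / θ) + (1 / 2) * (a - v) ^ 2 := by
  have hm : AntitoneOn (fun y : ℝ => lam * Real.log (1 + y / θ) + (1 / 2) * (y - v) ^ 2)
      (Set.Icc a b) := by
    apply antitoneOn_of_deriv_nonpos (convex_Icc a b)
    · intro x hx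
      exact (logprox_g_deriv lam θ v x hθ (ha.trans hx.1)).continuousAt.continuousWithinAt
    · intro x hx
      have hx := interior_subset hx
      exact (logprox_g_deriv lam θ v x hθ (ha.trans hx.1)).differentiableAt.differentiableWithinAt
    · intro x hx
      have hx := interior_subset hx
      rw [(logprox_g_deriv lam θ v x hθ (ha.trans hx.1)).deriv]
      exact div_nonpos_of_nonpos_of_nonneg (hq x hx.1 hx.2) (by linarith [hx.1])
  exact hm (Set.left_mem_Icc.2 hab) (Set.right_mem_Icc.2 hab) hab

/-- Proximity operator of the logarithmic penalty `φ(x) = λ·log(1 + |x|/θ)`: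
for `v ≥ 0` and `f(x) = φ(x) + (1/2)(x − v)²`, if `(v + θ)² < 4λ` then `0` is a global
minimizer of `f`; otherwise, with `x₁ = max(0, ((v − θ) + √((v + θ)² − 4λ))/2)`,
`min(f(0), f(x₁)) ≤ f(x)` for all `x`. -/
theorem log_prox_characterization (lam θ : ℝ) (hlam : 0 < lam) (hθ : 0 < θ)
    (φ : ℝ → ℝ) (hφ : ∀ x : ℝ, φ x = lam * Real.log (1 + |x| / θ))
    (v : ℝ) (hv : 0 ≤ v)
    (f : ℝ → ℝ) (hf : ∀ x : ℝ, f x = φ x + (1 / 2) * (x - v) ^ 2) :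
    ((v + θ) ^ 2 < 4 * lam → ∀ x : ℝ, f 0 ≤ f x) ∧
    (4 * lam ≤ (v + θ) ^ 2 →
      ∀ x : ℝ,
        min (f 0) (f (max 0 ((v - θ + Real.sqrt ((v + θ) ^ 2 - 4 * lam)) / 2))) ≤ f x) := by
  have hg : ∀ x : ℝ, 0 ≤ x → f x = lam * Real.log (1 + x / θ) + (1 / 2) * (x - v) ^ 2 := by
    intro x hx
    rw [hf, hφ, abs_of_nonneg hx]
  have habs : ∀ x : ℝ, f |x| ≤ f x := by
    intro x
    rw [hf, hf, hφ, hφ, abs_abs]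
    have h1 := mul_le_mul_of_nonneg_right (le_abs_self x) hv
    have h2 := sq_abs x
    nlinarith
  constructor
  · intro hd x
    refine le_trans ?_ (habs x)
    rw [hg 0 le_rfl, hg _ (abs_nonneg x)]
    apply logprox_g_mono lam θ v 0 |x| hθ le_rfl (abs_nonneg x)
    intro y _ _
    nlinarith [sq_nonneg (2 * y + θ - v)]
  · intro hd x
    refine le_trans ?_ (habs x)
    have hx := abs_nonneg x
    generalize |x| = x at hx
    set s := Real.sqrt ((v + θ) ^ 2 - 4 * lam) with hs
    have hs0 : 0 ≤ s := Real.sqrt_nonneg _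
    have hs2 : s ^ 2 = (v + θ) ^ 2 - 4 * lam := Real.sq_sqrt (by linarith)
    have hfac : ∀ y : ℝ, (y - v) * (y + θ) + lam
        = (y - (v - θ + s) / 2) * (y - (v - θ - s) / 2) := by
      intro y
      nlinarith
    rcases le_total (max 0 ((v - θ + s) / 2)) x with h | h
    · refine (min_le_right _ _).trans ?_
      rw [hg _ (le_max_left _ _), hg x hx]
      apply logprox_g_mono lam θ v _ x hθ (le_max_left _ _) h
      intro y hy _
      have := (le_max_right 0 ((v - θ + s) / 2)).trans hy
      rw [hfac]
      exact mul_nonneg (by linarith) (by linarith)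
    · rcases le_total x ((v - θ - s) / 2) with h' | h'
      · refine (min_le_left _ _).trans ?_
        rw [hg 0 le_rfl, hg x hx]
        apply logprox_g_mono lam θ v 0 x hθ le_rfl hx
        intro y _ hy
        rw [hfac]
        exact mul_nonneg_of_nonpos_of_nonpos (by linarith) (by linarith)
      · rcases le_total ((v - θ + s) / 2) 0 with h0 | h0
        · rw [max_eq_left h0] at h
          have : x = 0 := le_antisymm h hx
          rw [this]
          exact min_le_left _ _
        · rw [max_eq_right h0] at h ⊢
          refine (min_le_right _ _).trans ?_
          rw [hg _ h0, hg x hx]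
          apply logprox_g_anti lam θ v x _ hθ hx h
          intro y hy hy'
          rw [hfac]
          exact mul_nonpos_of_nonpos_of_nonneg (by linarith) (by linarith)
end

section
/- Let ψ : ℝ → ℝ be symmetric (ψ(−x) = ψ(x) for all x) and nondecreasing on [0, ∞), let μ > 0 and v ∈ ℝ, and let p be a global minimizer over ℝ of f(x) = μψ(x) + (1/2)(x − v)². Then p·v ≥ 0 and |p| ≤ |v|. -/
/-- Sign preservation and shrinkage of the proximity operator: if `ψ` is symmetric and
nondecreasing on `[0, ∞)`, `μ > 0`, and `p` is a global minimizer of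
`x ↦ μψ(x) + (1/2)(x − v)²`, then `p·v ≥ 0` and `|p| ≤ |v|`. -/
theorem prox_sign_shrink (ψ : ℝ → ℝ) (hsymm : ∀ x : ℝ, ψ (-x) = ψ x)
    (hmono : MonotoneOn ψ (Set.Ici 0)) (μ : ℝ) (hμ : 0 < μ) (v p : ℝ)
    (hp : ∀ x : ℝ, μ * ψ p + (1 / 2) * (p - v) ^ 2 ≤ μ * ψ x + (1 / 2) * (x - v) ^ 2) :
    0 ≤ p * v ∧ |p| ≤ |v| := by
  have habs : ∀ x : ℝ, ψ |x| = ψ x := by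
    intro x
    rcases abs_choice x with h | h <;> rw [h]
    exact hsymm x
  constructor
  · have h := hp (-p)
    rw [hsymm] at h
    nlinarith
  · by_contra hc
    have hlt : |v| < |p| := not_le.mp hc
    have h1 : ψ |v| ≤ ψ |p| := hmono (abs_nonneg v) (abs_nonneg p) hlt.le
    rw [habs, habs] at h1
    have h2 := hp v
    have h3 : μ * ψ v ≤ μ * ψ p := mul_le_mul_of_nonneg_left h1 hμ.le
    have h4 : (p - v) ^ 2 = 0 := by nlinarith [sq_nonneg (p - v)]
    have h5 : p = v := sub_eq_zero.mp (pow_eq_zero_iff (two_ne_zero)|>.mp h4)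
    rw [h5] at hlt
    exact lt_irrefl _ hlt
end
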